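/- Suppose 1/3 < α ≤ 1 and let Δ be the maximum degree of G. Let T ⊆ S ⊆ V with |S| = k, let v ∈ S∖T, and let B ⊆ V∖(T ∪ {v}) be a set of vertices such that contribution(b, T) ≥ contribution(v, T) for every b ∈ B and |B| ≥ (Δ+1)·(k−1) + 1. Then there exists a vertex v' ∈ B∖S such that val((S∖{v}) ∪ {v'}) ≥ val(S). -/

import Mathlib

open Finset

variable {V : Type*} [Fintype V] [DecidableEq V]

/-- Number of edges of `G` with both endpoints in `S`. -/
def mIn (G : SimpleGraph V) [DecidableRel G.Adj] (S : Finset V) : ℕ :=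
  (G.edgeFinset.filter (fun e => ∀ v ∈ e, v ∈ S)).card

/-- Number of edges of `G` with exactly one endpoint in `S`. -/
def mCut (G : SimpleGraph V) [DecidableRel G.Adj] (S : Finset V) : ℕ :=
  (G.edgeFinset.filter (fun e => (∃ v ∈ e, v ∈ S) ∧ ∃ v ∈ e, v ∉ S)).card

/-- `val(S) = α·(m(S, V∖S) + counter(S)) + (1−α)·m(S)`. -/
noncomputable def val (G : SimpleGraph V) [DecidableRel G.Adj] (counter : V → ℕ) (α : ℝ)
    (S : Finset V) : ℝ :=
  α * ((mCut G S : ℝ) + ∑ v ∈ S, (counter v : ℝ)) + (1 - α) * (mIn G S : ℝ)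

/-- `degc(v) = deg(v) + counter(v)`. -/
def degc (G : SimpleGraph V) [DecidableRel G.Adj] (counter : V → ℕ) (v : V) : ℕ :=
  G.degree v + counter v

/-- `contribution(v, T) = α·degc(v) + (1−3α)·|N(v) ∩ T|`. -/
noncomputable def contribution (G : SimpleGraph V) [DecidableRel G.Adj] (counter : V → ℕ)
    (α : ℝ) (v : V) (T : Finset V) : ℝ :=
  α * (degc G counter v : ℝ) + (1 - 3 * α) * ((G.neighborFinset v ∩ T).card : ℝ)

/-!
Counting incidences between `S` and the edges gives `2 m(S) + m(S, V∖S) = ∑_{v ∈ S} deg v`, so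
`val S = α ∑_{v ∈ S} degc v + (1 - 3α) m(S)`, and `contribution v A` is the marginal gain of adding
`v ∉ A` to `A`. For `α ≥ 1/3` this gain decreases with `A` and is at most `α degc v`, with equality
when `v` has no neighbour in `A`. The closed neighbourhoods of the `k - 1` vertices of
`A = S ∖ {v}` cover at most `(Δ + 1)(k - 1)` vertices, so some `b ∈ B` lies outside all of them, and
`contribution v A ≤ contribution v T ≤ contribution b T ≤ α degc b = contribution b A`.
-/

lemma card_filter_mem_sym2_of_not_isDiag (S : Finset V) {e : Sym2 V} (he : ¬ e.IsDiag) :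
    #{v ∈ S | v ∈ e} = 2 * (if ∀ v ∈ e, v ∈ S then 1 else 0) +
      if (∃ v ∈ e, v ∈ S) ∧ ∃ v ∈ e, v ∉ S then 1 else 0 := by
  induction e with
  | h a b =>
    have hab : a ≠ b := he
    have hfilter : ({v ∈ S | v ∈ s(a, b)} : Finset V) = S ∩ {a, b} := by
      ext; simp
    rw [hfilter]
    by_cases ha : a ∈ S <;> by_cases hb : b ∈ S <;> simp [ha, hb, hab]

section Edges

variable (G : SimpleGraph V) [DecidableRel G.Adj]

lemma two_mul_mIn_add_mCut (S : Finset V) : 2 * mIn G S + mCut G S = ∑ v ∈ S, G.degree v := by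
  calc
    2 * mIn G S + mCut G S = ∑ e ∈ G.edgeFinset, #{v ∈ S | v ∈ e} := by
      rw [mIn, mCut, card_filter, card_filter, mul_sum, ← sum_add_distrib]
      refine sum_congr rfl fun e he ↦ (card_filter_mem_sym2_of_not_isDiag S ?_).symm
      exact G.not_isDiag_of_mem_edgeFinset he
    _ = ∑ v ∈ S, #{e ∈ G.edgeFinset | v ∈ e} :=
      (sum_card_bipartiteAbove_eq_sum_card_bipartiteBelow (· ∈ ·)).symm
    _ = ∑ v ∈ S, G.degree v := by
      simp only [← G.incidenceFinset_eq_filter, G.card_incidenceFinset_eq_degree]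

lemma mIn_insert {x : V} {A : Finset V} (hx : x ∉ A) :
    mIn G (insert x A) = mIn G A + #(G.neighborFinset x ∩ A) := by
  have hsplit : ({e ∈ G.edgeFinset | ∀ v ∈ e, v ∈ insert x A} : Finset (Sym2 V)) =
      {e ∈ G.edgeFinset | ∀ v ∈ e, v ∈ A} ∪ (G.neighborFinset x ∩ A).image (s(x, ·)) := by
    ext e
    induction e with
    | h a b =>
      have hne := G.ne_of_adj (a := a) (b := b)
      have hcomm := G.adj_comm a b
      simp only [mem_filter, mem_union, mem_image, mem_inter, mem_insert,
        SimpleGraph.mem_edgeFinset, SimpleGraph.mem_edgeSet, SimpleGraph.mem_neighborFinset,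
        Sym2.mem_iff, forall_eq_or_imp, forall_eq, Sym2.eq_iff]
      grind
  have hdisj : Disjoint ({e ∈ G.edgeFinset | ∀ v ∈ e, v ∈ A} : Finset (Sym2 V))
      ((G.neighborFinset x ∩ A).image (s(x, ·))) := by
    refine disjoint_left.2 fun e he he' ↦ hx ?_
    obtain ⟨a, -, rfl⟩ := mem_image.1 he'
    exact (mem_filter.1 he).2 x (Sym2.mem_mk_left x a)
  rw [mIn, hsplit, card_union_of_disjoint hdisj,
    card_image_of_injective _ fun _ _ ↦ Sym2.congr_right.1, mIn]

lemma exists_mem_disjoint_insert_neighborFinset {A B : Finset V}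
    (hcard : (G.maxDegree + 1) * #A < #B) :
    ∃ b ∈ B, Disjoint (insert b (G.neighborFinset b)) A := by
  have hcover : #(A.biUnion fun a ↦ insert a (G.neighborFinset a)) ≤ #A * (G.maxDegree + 1) :=
    card_biUnion_le_card_mul _ _ _ fun a _ ↦
      (card_insert_le _ _).trans (Nat.succ_le_succ (G.degree_le_maxDegree a))
  obtain ⟨b, hbB, hb⟩ :=
    exists_mem_notMem_of_card_lt_card (hcover.trans_lt (mul_comm #A _ ▸ hcard))
  refine ⟨b, hbB, disjoint_right.2 fun a haA hab ↦ hb (mem_biUnion.2 ⟨a, haA, ?_⟩)⟩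
  simpa only [mem_insert, SimpleGraph.mem_neighborFinset, eq_comm, G.adj_comm] using hab

end Edges

section Value

variable (G : SimpleGraph V) [DecidableRel G.Adj] (counter : V → ℕ) (α : ℝ)

lemma val_eq_sum_degc_add_mIn (S : Finset V) :
    val G counter α S = α * ∑ v ∈ S, (degc G counter v : ℝ) + (1 - 3 * α) * mIn G S := by
  have hdegree : 2 * (mIn G S : ℝ) + mCut G S = ∑ v ∈ S, (G.degree v : ℝ) :=
    mod_cast two_mul_mIn_add_mCut G S
  simp only [_root_.val, degc, Nat.cast_add, sum_add_distrib, ← hdegree]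
  ring

lemma val_insert {x : V} {A : Finset V} (hx : x ∉ A) :
    val G counter α (insert x A) = val G counter α A + contribution G counter α x A := by
  rw [val_eq_sum_degc_add_mIn, val_eq_sum_degc_add_mIn, contribution, sum_insert hx,
    mIn_insert G hx]
  push_cast
  ring

lemma val_le_val_insert_erase_iff {S : Finset V} {v b : V} (hv : v ∈ S) (hb : b ∉ S.erase v) :
    val G counter α S ≤ val G counter α (insert b (S.erase v)) ↔
      contribution G counter α v (S.erase v) ≤ contribution G counter α b (S.erase v) := by
  have hval : val G counter α S =
      val G counter α (S.erase v) + contribution G counter α v (S.erase v) := by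
    rw [← val_insert G counter α (notMem_erase v S), insert_erase hv]
  rw [hval, val_insert G counter α hb, add_le_add_iff_left]

lemma contribution_eq_of_disjoint {v : V} {T : Finset V}
    (h : Disjoint (G.neighborFinset v) T) :
    contribution G counter α v T = α * degc G counter v := by
  simp [contribution, disjoint_iff_inter_eq_empty.1 h]

variable {α}

lemma contribution_antitone (hα : 1 / 3 ≤ α) (v : V) : Antitone (contribution G counter α v) := by
  intro T A hTA
  have hcoeff : 1 - 3 * α ≤ 0 := by linarith
  have hcard : (#(G.neighborFinset v ∩ T) : ℝ) ≤ #(G.neighborFinset v ∩ A) :=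
    mod_cast card_le_card (inter_subset_inter_left hTA)
  exact add_le_add_right (mul_le_mul_of_nonpos_left hcard hcoeff) _

lemma contribution_le_mul_degc (hα : 1 / 3 ≤ α) (v : V) (T : Finset V) :
    contribution G counter α v T ≤ α * degc G counter v :=
  (contribution_antitone G counter hα v (empty_subset T)).trans_eq
    (contribution_eq_of_disjoint G counter α (disjoint_empty_right _))

end Value

theorem exchange_better_maxDegree_general (G : SimpleGraph V) [DecidableRel G.Adj]
    (counter : V → ℕ) {α : ℝ} (hα : 1 / 3 ≤ α) {T S B : Finset V} (hTS : T ⊆ S) {v : V}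
    (hvS : v ∈ S) (hvT : v ∉ T) (hvB : v ∉ B)
    (hBbetter : ∀ b ∈ B, contribution G counter α v T ≤ contribution G counter α b T)
    (hBcard : (G.maxDegree + 1) * (#S - 1) < #B) :
    ∃ b ∈ B, b ∉ S ∧ val G counter α S ≤ val G counter α (insert b (S.erase v)) := by
  obtain ⟨b, hbB, hclosed⟩ :=
    exists_mem_disjoint_insert_neighborFinset G (card_erase_of_mem hvS ▸ hBcard)
  obtain ⟨hb, hdisj⟩ := disjoint_insert_left.1 hclosed
  have hbv : b ≠ v := ne_of_mem_of_not_mem hbB hvB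
  refine ⟨b, hbB, fun hbS ↦ hb (mem_erase.2 ⟨hbv, hbS⟩), ?_⟩
  rw [val_le_val_insert_erase_iff G counter α hvS hb]
  calc
    contribution G counter α v (S.erase v) ≤ contribution G counter α v T :=
      contribution_antitone G counter hα v (subset_erase.2 ⟨hTS, hvT⟩)
    _ ≤ contribution G counter α b T := hBbetter b hbB
    _ ≤ α * degc G counter b := contribution_le_mul_degc G counter hα b T
    _ = contribution G counter α b (S.erase v) :=
      (contribution_eq_of_disjoint G counter α hdisj).symm

/-- If there are at least `(Δ+1)(k−1)+1` vertices outside `T ∪ {v}` that are better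
than `v ∈ S ∖ T` w.r.t. `T` (for `1/3 < α ≤ 1`), then `v` can be exchanged with one
of them without decreasing `val`. -/
theorem exchange_better_maxDegree (G : SimpleGraph V) [DecidableRel G.Adj]
    (counter : V → ℕ) (α : ℝ) (hα1 : 1 / 3 < α) (hα2 : α ≤ 1)
    (k : ℕ) (T S : Finset V) (hTS : T ⊆ S) (hScard : S.card = k)
    (v : V) (hvS : v ∈ S) (hvT : v ∉ T)
    (B : Finset V) (hB : Disjoint B (insert v T))
    (hBbetter : ∀ b ∈ B, contribution G counter α b T ≥ contribution G counter α v T)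
    (hBcard : (G.maxDegree + 1) * (k - 1) + 1 ≤ B.card) :
    ∃ v' ∈ B, v' ∉ S ∧
      val G counter α (insert v' (S.erase v)) ≥ val G counter α S := by
  subst hScard
  exact exchange_better_maxDegree_general G counter hα1.le hTS hvS hvT
    (disjoint_right.1 hB (mem_insert_self v T)) hBbetter hBcard
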